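/- With the notation of the iterated integrals Ω at φ = π/4, one has Ω_{2,2,2,1} = −(iπ³/12)·log 2 + (iπ/4)·ζ(3). -/

import Mathlib

noncomputable section

/-- `p₁ = e^{iπ/4}` -/
def p₁ : ℂ := Complex.exp (Complex.I * ((Real.pi : ℂ) / 4))
/-- `p₂ = -e^{-iπ/4}` -/
def p₂ : ℂ := -Complex.exp (-(Complex.I * ((Real.pi : ℂ) / 4)))
/-- `p₃ = -p₁` -/
def p₃ : ℂ := -p₁
/-- `p₄ = -p₂` -/
def p₄ : ℂ := -p₂

def F₁ (z : ℂ) : ℂ := 1 / (z - p₁) - 1 / (z - p₂) + 1 / (z - p₃) - 1 / (z - p₄)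

def F₂ (z : ℂ) : ℂ := 1 / (z - p₁) - 1 / (z - p₂) - 1 / (z - p₃) + 1 / (z - p₄)

def F₃ (z : ℂ) : ℂ := 1 / (z - p₁) + 1 / (z - p₂) - 1 / (z - p₃) - 1 / (z - p₄)

/-- Iterated integral along `[0, z]`:
`Omega [F_{i₁}, …, F_{iₙ}] z = Ω_{i₁,…,iₙ}(z)`, defined recursively by
`Ω_{i₁,…,i_k}(z) = ∫₀ᶻ Ω_{i₁,…,i_{k-1}}(t) · F_{i_k}(t) dt`, with `Ω_∅ ≡ 1`. -/
def Omega (fs : List (ℂ → ℂ)) : ℝ → ℂ :=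
  fs.foldl (fun g f => fun z => ∫ t in (0:ℝ)..z, g t * f (t : ℂ)) (fun _ => 1)

/-!
On the real line `Ω₂` is the odd real function `L x = log (q x / q (-x))` with
`q x = (x - p₁) (x - p₄)`, so `Ω_{2,2,2}` is `L ^ 3 / 6`. As `F₁ x = i √2 (1 / q x - 1 / q (-x))`,
oddness turns `Ω_{2,2,2,1}` into `i / 6` times the integral of `L ^ 3 √2 / q` over `[-1, 1]`. The
substitution `dθ = √2 dx / q x` makes `L` into `-log ‖√2 + e^{iθ}‖²` and the interval into a half
circle, and so leads to the circle average of the cube of `log 2 + 2 Re f`, where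
`f z = log (1 + z / √2)`.

The powers of the holomorphic function `f`, which vanishes at `0`, average to zero. The mixed terms
`f ^ k * conj f` are evaluated by writing `conj f` on the circle as an integral of Cauchy kernels,
with the result `-∫ log (1 - u) ^ k / u` over `[0, 1/2]`. For `k = 1, 2` these are the classical
integrals behind `Li₂ (1/2)` and `Li₃ (1/2)`, and the terms `log 2 ^ 3` cancel.
-/

open Set MeasureTheory Real Metric
open scoped ComplexConjugate

/-! ### Integrals of powers of logarithms -/

/-- `HasIntegralOn f s v` says that `f` is integrable on `s` with integral `v`, the counterpart of
`HasSum` for set integrals: the Bochner integral alone would be `0` for a non-integrable `f`. -/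
def HasIntegralOn (f : ℝ → ℝ) (s : Set ℝ) (v : ℝ) : Prop :=
  IntegrableOn f s ∧ ∫ x in s, f x = v

namespace HasIntegralOn

variable {f g : ℝ → ℝ} {s t : Set ℝ} {a b v w : ℝ}

theorem congr (hf : HasIntegralOn f s v) (hs : MeasurableSet s) (h : EqOn g f s) :
    HasIntegralOn g s v :=
  ⟨(integrableOn_congr_fun h hs).2 hf.1, (setIntegral_congr_fun hs h).trans hf.2⟩

theorem add (hf : HasIntegralOn f s v) (hg : HasIntegralOn g s w) :
    HasIntegralOn (fun x => f x + g x) s (v + w) :=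
  ⟨hf.1.add hg.1, by rw [integral_add hf.1 hg.1, hf.2, hg.2]⟩

theorem sub (hf : HasIntegralOn f s v) (hg : HasIntegralOn g s w) :
    HasIntegralOn (fun x => f x - g x) s (v - w) :=
  ⟨hf.1.sub hg.1, by rw [integral_sub hf.1 hg.1, hf.2, hg.2]⟩

theorem const_mul (hf : HasIntegralOn f s v) (c : ℝ) :
    HasIntegralOn (fun x => c * f x) s (c * v) :=
  ⟨hf.1.const_mul c, by rw [integral_const_mul, hf.2]⟩

theorem intervalIntegral_eq (hf : HasIntegralOn f (Ioo a b) v) (hab : a ≤ b) :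
    ∫ x in a..b, f x = v := by
  rw [intervalIntegral.integral_of_le hab, integral_Ioc_eq_integral_Ioo, hf.2]

theorem of_hasDerivAt {F : ℝ → ℝ} (hab : a ≤ b) (hF : ∀ x ∈ Icc a b, HasDerivAt F (f x) x)
    (hf : ContinuousOn f (Icc a b)) : HasIntegralOn f (Ioo a b) (F b - F a) := by
  rw [← uIcc_of_le hab] at hF hf
  have hint : IntervalIntegrable f volume a b := hf.intervalIntegrable
  refine ⟨(intervalIntegrable_iff_integrableOn_Ioo_of_le hab).1 hint, ?_⟩
  rw [← integral_Ioc_eq_integral_Ioo, ← intervalIntegral.integral_of_le hab,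
    intervalIntegral.integral_eq_sub_of_hasDerivAt hF hint]

theorem iff_comp_of_invOn {φ φ' ψ : ℝ → ℝ} (hs : MeasurableSet s)
    (hφ : ∀ x ∈ s, HasDerivAt φ (φ' x) x) (hst : MapsTo φ s t) (hts : MapsTo ψ t s)
    (hinv : InvOn ψ φ s t) :
    HasIntegralOn f t v ↔ HasIntegralOn (fun x => |φ' x| * f (φ x)) s v := by
  have hbij : BijOn φ s t := hinv.bijOn hst hts
  have hφ' : ∀ x ∈ s, HasDerivWithinAt φ (φ' x) s x := fun x hx => (hφ x hx).hasDerivWithinAt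
  rw [HasIntegralOn, HasIntegralOn, ← hbij.image_eq,
    integrableOn_image_iff_integrableOn_abs_deriv_smul hs hφ' hbij.injOn,
    integral_image_eq_integral_abs_deriv_smul hs hφ' hbij.injOn]
  simp only [smul_eq_mul]

theorem comp_pow_div {n : ℕ} (hn : n ≠ 0) (hf : HasIntegralOn (fun x => f x / x) (Ioo 0 1) v) :
    HasIntegralOn (fun x => f (x ^ n) / x) (Ioo 0 1) (v / n) := by
  have hmaps : MapsTo (fun x : ℝ => x ^ n) (Ioo 0 1) (Ioo 0 1) := fun x hx =>
    ⟨pow_pos hx.1 n, pow_lt_one₀ hx.1.le hx.2 hn⟩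
  have hmaps' : MapsTo (fun x : ℝ => x ^ (n : ℝ)⁻¹) (Ioo 0 1) (Ioo 0 1) := fun x hx =>
    ⟨rpow_pos_of_pos hx.1 _, rpow_lt_one hx.1.le hx.2 (by positivity)⟩
  have hinv : InvOn (fun x : ℝ => x ^ (n : ℝ)⁻¹) (fun x => x ^ n) (Ioo 0 1) (Ioo 0 1) :=
    ⟨fun x hx => pow_rpow_inv_natCast hx.1.le hn, fun x hx => rpow_inv_natCast_pow hx.1.le hn⟩
  have hsubst := (iff_comp_of_invOn measurableSet_Ioo (fun x _ => hasDerivAt_pow n x)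
    hmaps hmaps' hinv).1 hf
  rw [div_eq_inv_mul]
  refine (hsubst.const_mul (n : ℝ)⁻¹).congr measurableSet_Ioo fun x hx => ?_
  have hx0 : 0 < x := hx.1
  have hpow : x ^ n = x ^ (n - 1) * x := (pow_sub_one_mul hn x).symm
  simp only [abs_of_pos (show 0 < n * x ^ (n - 1) by positivity)]
  nth_rw 3 [hpow]
  field_simp

end HasIntegralOn

theorem hasSum_exp_neg_nat_add_one_mul {t : ℝ} (ht : 0 < t) :
    HasSum (fun n : ℕ => rexp (-(n + 1) * t)) (rexp t - 1)⁻¹ := by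
  have hgeom := (hasSum_geometric_of_lt_one (exp_pos (-t)).le
    (exp_lt_one_iff.2 (neg_lt_zero.2 ht))).mul_left (rexp (-t))
  convert! hgeom using 1
  · ext n
    rw [← Real.exp_nat_mul, ← Real.exp_add]
    ring_nf
  · rw [Real.exp_neg, ← mul_inv, mul_sub, mul_inv_cancel₀ (exp_ne_zero t), mul_one]

theorem mellin_inv_exp_sub_one {s : ℂ} (hs : 1 < s.re) :
    mellin (fun t => (((rexp t - 1)⁻¹ : ℝ) : ℂ)) s = Complex.Gamma s * riemannZeta s := by
  have hsum : HasSum (fun n : ℕ => Complex.Gamma s * 1 / (((n : ℝ) + 1 : ℝ) : ℂ) ^ s)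
      (mellin (fun t => (((rexp t - 1)⁻¹ : ℝ) : ℂ)) s) := by
    refine hasSum_mellin (fun n => Or.inr (by positivity)) (by linarith) (fun t ht => ?_) ?_
    · simpa using Complex.hasSum_ofReal.2 (hasSum_exp_neg_nat_add_one_mul ht)
    · simpa using (summable_nat_add_iff 1).2 (Real.summable_one_div_nat_rpow.2 hs)
  rw [← hsum.tsum_eq, zeta_eq_tsum_one_div_nat_add_one_cpow hs, ← tsum_mul_left]
  simp [div_eq_mul_inv]

theorem ofReal_re_riemannZeta_natCast {n : ℕ} (hn : 1 < n) :
    ((riemannZeta n).re : ℂ) = riemannZeta n := by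
  have hreal : riemannZeta n = ((∑' m : ℕ, 1 / (m : ℝ) ^ n : ℝ) : ℂ) := by
    rw [zeta_nat_eq_tsum_of_gt_one hn]
    push_cast
    rfl
  rw [hreal, Complex.ofReal_re]

theorem hasIntegralOn_pow_div_exp_sub_one {k : ℕ} (hk : k ≠ 0) :
    HasIntegralOn (fun x => x ^ k / (rexp x - 1)) (Ioi 0)
      (k.factorial * (riemannZeta (k + 1)).re) := by
  have hre : 1 < ((k : ℂ) + 1).re := by simp [Nat.pos_of_ne_zero hk]
  have hζ : ((riemannZeta (k + 1)).re : ℂ) = riemannZeta (k + 1) := by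
    exact_mod_cast ofReal_re_riemannZeta_natCast (n := k + 1) (by lia)
  have hint : ∫ x in Ioi 0, x ^ k / (rexp x - 1) = k.factorial * (riemannZeta (k + 1)).re := by
    have hmellin := mellin_inv_exp_sub_one hre
    rw [Complex.Gamma_nat_eq_factorial, ← hζ, mellin] at hmellin
    have : ∀ x : ℝ, (x : ℂ) ^ ((k : ℂ) + 1 - 1) • (((rexp x - 1)⁻¹ : ℝ) : ℂ) =
      ((x ^ k / (rexp x - 1) : ℝ) : ℂ) := fun x => by simp [div_eq_mul_inv]
    simp_rw [this, integral_complex_ofReal] at hmellin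
    exact_mod_cast hmellin
  refine ⟨Integrable.of_integral_ne_zero ?_, hint⟩
  have hζ0 : (riemannZeta (k + 1)).re ≠ 0 := fun h =>
    riemannZeta_ne_zero_of_one_le_re hre.le (by rw [← hζ, h, Complex.ofReal_zero])
  rw [hint]
  positivity

/-- The common value of `∫₀¹ log(x)ᵏ / (1 - x) dx` and `∫₀¹ log(1 - x)ᵏ / x dx` for `k ≠ 0`, in
which the other logarithmic integrals over the unit interval are expressed. -/
def logMoment (k : ℕ) : ℝ :=
  (-1) ^ k * (k.factorial * (riemannZeta (k + 1)).re)

theorem logMoment_one : logMoment 1 = -(π ^ 2 / 6) := by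
  have hζ : riemannZeta (1 + 1) = ((π ^ 2 / 6 : ℝ) : ℂ) := by
    rw [one_add_one_eq_two, riemannZeta_two]
    push_cast
    rfl
  simp [logMoment, hζ, -Complex.ofReal_div]

theorem ofReal_logMoment_two : (logMoment 2 : ℂ) = 2 * riemannZeta 3 := by
  have hζ := ofReal_re_riemannZeta_natCast (n := 3) (by norm_num)
  norm_num [logMoment] at hζ ⊢
  rw [hζ]

theorem hasIntegralOn_log_pow_div_one_sub {k : ℕ} (hk : k ≠ 0) :
    HasIntegralOn (fun x => log x ^ k / (1 - x)) (Ioo 0 1) (logMoment k) := by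
  have hderiv : ∀ x ∈ Ioi (0 : ℝ), HasDerivAt (fun x => rexp (-x)) (-rexp (-x)) x := fun x _ => by
    simpa using (hasDerivAt_neg x).exp
  have hmaps : MapsTo (fun x => rexp (-x)) (Ioi 0) (Ioo 0 1) := fun x hx =>
    ⟨exp_pos _, exp_lt_one_iff.2 (neg_lt_zero.2 hx)⟩
  have hmaps' : MapsTo (fun x => -log x) (Ioo 0 1) (Ioi 0) := fun x hx =>
    neg_pos.2 (log_neg hx.1 hx.2)
  have hinv : InvOn (fun x => -log x) (fun x => rexp (-x)) (Ioi 0) (Ioo 0 1) :=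
    ⟨fun x _ => by simp, fun x hx => by simp [exp_log hx.1]⟩
  refine (HasIntegralOn.iff_comp_of_invOn measurableSet_Ioi hderiv hmaps hmaps' hinv).2 ?_
  refine ((hasIntegralOn_pow_div_exp_sub_one hk).const_mul _).congr measurableSet_Ioi fun x _ => ?_
  have hexp : rexp x - 1 = rexp x * (1 - rexp (-x)) := by
    rw [mul_sub, ← Real.exp_add]
    simp
  simp only [abs_neg, abs_exp, log_exp, hexp]
  rw [neg_pow, Real.exp_neg]
  field_simp

theorem hasIntegralOn_log_one_sub_pow_div {k : ℕ} (hk : k ≠ 0) :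
    HasIntegralOn (fun x => log (1 - x) ^ k / x) (Ioo 0 1) (logMoment k) := by
  have hmaps : MapsTo (fun x : ℝ => 1 - x) (Ioo 0 1) (Ioo 0 1) := fun x hx =>
    ⟨sub_pos.2 hx.2, sub_lt_self 1 hx.1⟩
  have hinv : LeftInvOn (fun x : ℝ => 1 - x) (fun x => 1 - x) (Ioo 0 1) := fun x _ =>
    sub_sub_cancel 1 x
  refine (HasIntegralOn.iff_comp_of_invOn measurableSet_Ioo
    (fun x _ => (hasDerivAt_id x).const_sub 1) hmaps hmaps ⟨hinv, hinv⟩).2 ?_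
  simpa using hasIntegralOn_log_pow_div_one_sub hk

theorem hasIntegralOn_log_one_sub_sq_pow_div {k : ℕ} (hk : k ≠ 0) :
    HasIntegralOn (fun x => log (1 - x ^ 2) ^ k / x) (Ioo 0 1) (logMoment k / 2) :=
  (hasIntegralOn_log_one_sub_pow_div hk).comp_pow_div two_ne_zero

theorem hasIntegralOn_mul_log_pow_div_one_sub_sq {k : ℕ} (hk : k ≠ 0) :
    HasIntegralOn (fun x => x * log x ^ k / (1 - x ^ 2)) (Ioo 0 1)
      (logMoment k / 2 ^ (k + 1)) := by
  have hbase : HasIntegralOn (fun x => (x * log x ^ k / (1 - x)) / x) (Ioo 0 1) (logMoment k) :=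
    (hasIntegralOn_log_pow_div_one_sub hk).congr measurableSet_Ioo fun x hx => by
      have := hx.1.ne'
      field_simp
  convert! ((hbase.comp_pow_div two_ne_zero).const_mul (2 ^ k)⁻¹).congr measurableSet_Ioo
    (g := fun x => x * log x ^ k / (1 - x ^ 2)) fun x hx => ?_ using 1
  · push_cast
    ring
  · have := hx.1.ne'
    simp only [log_pow, mul_pow, Nat.cast_ofNat]
    field_simp

theorem hasIntegralOn_log_div_pow_div {k : ℕ} (hk : k ≠ 0) :
    HasIntegralOn (fun x => log ((1 - x) / (1 + x)) ^ k / x) (Ioo 0 1)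
      ((2 - (2 ^ k)⁻¹) * logMoment k) := by
  have hderiv : ∀ x ∈ Ioo (0 : ℝ) 1,
      HasDerivAt (fun x => (1 - x) / (1 + x)) (-(2 / (1 + x) ^ 2)) x := fun x hx => by
    refine (((hasDerivAt_id x).const_sub 1).div ((hasDerivAt_id x).const_add 1)
      (by simp only [id]; linarith [hx.1])).congr_deriv ?_
    simp only [id]
    ring
  have hmaps : MapsTo (fun x : ℝ => (1 - x) / (1 + x)) (Ioo 0 1) (Ioo 0 1) := fun x hx =>
    ⟨div_pos (by linarith [hx.2]) (by linarith [hx.1]),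
      (div_lt_one (by linarith [hx.1])).2 (by linarith [hx.1])⟩
  have hinv : LeftInvOn (fun x : ℝ => (1 - x) / (1 + x)) (fun x => (1 - x) / (1 + x)) (Ioo 0 1) :=
    fun x hx => by
      have : 1 + x ≠ 0 := by linarith [hx.1]
      simp only
      field_simp
      ring
  refine (HasIntegralOn.iff_comp_of_invOn measurableSet_Ioo hderiv hmaps hmaps ⟨hinv, hinv⟩).2 ?_
  convert! (((hasIntegralOn_log_pow_div_one_sub hk).const_mul 2).sub
    ((hasIntegralOn_mul_log_pow_div_one_sub_sq hk).const_mul 2)).congr measurableSet_Ioo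
    fun x hx => ?_ using 1
  · rw [pow_succ]
    field_simp
  · have hx0 : 1 + x ≠ 0 := by linarith [hx.1]
    have hx1 : 1 - x ≠ 0 := by linarith [hx.2]
    have hinvx : (1 - (1 - x) / (1 + x)) / (1 + (1 - x) / (1 + x)) = x := hinv hx
    have hsq : 1 - x ^ 2 = (1 - x) * (1 + x) := by ring
    simp only [hinvx, abs_neg, abs_of_nonneg (show 0 ≤ 2 / (1 + x) ^ 2 by positivity), hsq]
    field_simp
    ring

theorem log_one_sub_sq {x : ℝ} (hx : x ∈ Ioo (0 : ℝ) 1) :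
    log (1 - x ^ 2) = log (1 - x) + log (1 + x) := by
  rw [← log_mul (by linarith [hx.2]) (by linarith [hx.1])]
  ring_nf

theorem hasIntegralOn_log_one_add_div :
    HasIntegralOn (fun x => log (1 + x) / x) (Ioo 0 1) (π ^ 2 / 12) := by
  convert! ((hasIntegralOn_log_one_sub_sq_pow_div one_ne_zero).sub
    (hasIntegralOn_log_one_sub_pow_div one_ne_zero)).congr measurableSet_Ioo fun x hx => ?_ using 1
  · rw [logMoment_one]
    ring
  · simp only [log_one_sub_sq hx]
    ring

theorem hasIntegralOn_log_one_add_sq_div :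
    HasIntegralOn (fun x => log (1 + x) ^ 2 / x) (Ioo 0 1) (logMoment 2 / 8) := by
  have hsum := hasIntegralOn_log_one_sub_sq_pow_div two_ne_zero
  have hdiff := hasIntegralOn_log_div_pow_div two_ne_zero
  have hminus := hasIntegralOn_log_one_sub_pow_div two_ne_zero
  -- `b² = ((a + b)² + (a - b)²) / 2 - a²` with `a = log (1 - x)`, `b = log (1 + x)`
  convert! (((hsum.add hdiff).const_mul (1 / 2)).sub hminus).congr measurableSet_Ioo
    fun x hx => ?_ using 1
  · ring
  · simp only [log_one_sub_sq hx]
    rw [log_div (by linarith [hx.2]) (by linarith [hx.1])]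
    ring

theorem hasIntegralOn_log_one_add_pow_div_one_add (k : ℕ) :
    HasIntegralOn (fun x => log (1 + x) ^ k / (1 + x)) (Ioo 0 1) (log 2 ^ (k + 1) / (k + 1)) := by
  have hne : ∀ x ∈ Icc (0 : ℝ) 1, 1 + x ≠ 0 := fun x hx => by linarith [hx.1]
  have hderiv : ∀ x ∈ Icc (0 : ℝ) 1,
      HasDerivAt (fun x => log (1 + x) ^ (k + 1) / (k + 1)) (log (1 + x) ^ k / (1 + x)) x :=
    fun x hx => by
      refine ((((hasDerivAt_id x).const_add 1).log (hne x hx)).pow (k + 1)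
        |>.div_const ((k : ℝ) + 1)).congr_deriv ?_
      simp only [id, Nat.add_sub_cancel, Nat.cast_add, Nat.cast_one]
      field_simp
  convert! HasIntegralOn.of_hasDerivAt zero_le_one hderiv (by fun_prop (disch := exact hne)) using 1
  norm_num

theorem HasIntegralOn.log_one_sub_pow_div_Ioo_half {k : ℕ} {v : ℝ}
    (h : HasIntegralOn (fun x => log (1 + x) ^ k / x) (Ioo 0 1) v) :
    HasIntegralOn (fun x => log (1 - x) ^ k / x) (Ioo 0 (1 / 2))
      ((-1) ^ k * (v - log 2 ^ (k + 1) / (k + 1))) := by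
  have hderiv : ∀ x ∈ Ioo (0 : ℝ) 1, HasDerivAt (fun x => x / (1 + x)) (1 / (1 + x) ^ 2) x :=
    fun x hx => by
      refine ((hasDerivAt_id x).div ((hasDerivAt_id x).const_add 1)
        (by simp only [id]; linarith [hx.1])).congr_deriv ?_
      simp only [id]
      ring
  have hmaps : MapsTo (fun x : ℝ => x / (1 + x)) (Ioo 0 1) (Ioo 0 (1 / 2)) := fun x hx =>
    have hx0 : 0 < 1 + x := by linarith [hx.1]
    ⟨div_pos hx.1 hx0, (div_lt_iff₀ hx0).2 (by linarith [hx.2])⟩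
  have hmaps' : MapsTo (fun x : ℝ => x / (1 - x)) (Ioo 0 (1 / 2)) (Ioo 0 1) := fun x hx =>
    have hx1 : 0 < 1 - x := by linarith [hx.2]
    ⟨div_pos hx.1 hx1, (div_lt_one hx1).2 (by linarith [hx.2])⟩
  have hinv : InvOn (fun x : ℝ => x / (1 - x)) (fun x => x / (1 + x)) (Ioo 0 1) (Ioo 0 (1 / 2)) :=
    ⟨fun x hx => by
      have : 1 + x ≠ 0 := by linarith [hx.1]
      simp only
      field_simp
      ring, fun x hx => by
      have : 1 - x ≠ 0 := by linarith [hx.2]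
      simp only
      field_simp
      ring⟩
  refine (HasIntegralOn.iff_comp_of_invOn measurableSet_Ioo hderiv hmaps hmaps' hinv).2 ?_
  refine ((h.sub (hasIntegralOn_log_one_add_pow_div_one_add k)).const_mul _).congr
    measurableSet_Ioo fun x hx => ?_
  have hx0 : 0 < x := hx.1
  have hone : 1 - x / (1 + x) = (1 + x)⁻¹ := by
    field_simp
    ring
  simp only [hone, log_inv, abs_of_pos (show 0 < 1 / (1 + x) ^ 2 by positivity)]
  rw [neg_pow]
  field_simp
  ring

theorem integral_log_one_sub_div :
    ∫ x in (0 : ℝ)..1 / 2, log (1 - x) / x = log 2 ^ 2 / 2 - π ^ 2 / 12 := by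
  have h := HasIntegralOn.log_one_sub_pow_div_Ioo_half (k := 1)
    (by simpa using hasIntegralOn_log_one_add_div)
  have := h.intervalIntegral_eq (by norm_num)
  norm_num at this ⊢
  linarith

theorem integral_log_one_sub_sq_div :
    ∫ x in (0 : ℝ)..1 / 2, log (1 - x) ^ 2 / x = logMoment 2 / 8 - log 2 ^ 3 / 3 := by
  rw [(hasIntegralOn_log_one_add_sq_div.log_one_sub_pow_div_Ioo_half).intervalIntegral_eq
    (by norm_num)]
  norm_num

/-! ### Circle averages of logarithms -/

section CircleAverage

variable {b : ℂ} {g : ℂ → ℂ}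

theorem circleAverage_intervalIntegral_swap {E : Type*} [NormedAddCommGroup E] [NormedSpace ℝ E]
    {F : ℂ → ℝ → E} {c : ℂ} {R t₀ t₁ : ℝ}
    (hF : ContinuousOn (Function.uncurry F) (sphere c |R| ×ˢ uIcc t₀ t₁)) :
    circleAverage (fun z => ∫ t in t₀..t₁, F z t) c R =
      ∫ t in t₀..t₁, circleAverage (fun z => F z t) c R := by
  have hcont : ContinuousOn (Function.uncurry fun θ t => F (circleMap c R θ) t)
      (uIcc 0 (2 * π) ×ˢ uIcc t₀ t₁) :=
    hF.comp (f := fun p : ℝ × ℝ => (circleMap c R p.1, p.2)) (by fun_prop) fun p hp =>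
      ⟨circleMap_mem_sphere' c R p.1, hp.2⟩
  have hint := (hcont.integrableOn_compact (isCompact_uIcc.prod isCompact_uIcc)).mono_set
    (Set.prod_mono uIoc_subset_uIcc uIoc_subset_uIcc) (μ := volume)
  simp only [circleAverage_def, intervalIntegral.integral_smul]
  rw [intervalIntegral_intervalIntegral_swap hint]

theorem add_ne_zero_of_norm_lt {E : Type*} [SeminormedAddGroup E] {x y : E} (h : ‖y‖ < ‖x‖) :
    x + y ≠ 0 := fun hxy => by
  rw [eq_neg_of_add_eq_zero_left hxy, norm_neg] at h
  exact h.false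

theorem circleAverage_mul_div_add {w : ℂ} {t : ℝ} (hg : DiffContOnCl ℂ g (ball 0 1))
    (ht : t ≠ 0) (hw : ‖t * w‖ < 1) :
    circleAverage (fun z => g z * (w / (z + t * w))) 0 1 = (g 0 - g (-(t * w))) / t := by
  rw [← abs_one] at hg
  have hcont : ContinuousOn g (sphere 0 |1|) := hg.continuousOn_ball.mono sphere_subset_closedBall
  have hne : ∀ z ∈ sphere (0 : ℂ) |1|, z + t * w ≠ 0 := fun z hz =>
    add_ne_zero_of_norm_lt (by rwa [mem_sphere_zero_iff_norm.1 hz, abs_one])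
  have hmean : circleAverage g 0 1 = g 0 := hg.circleAverage
  have hcauchy : circleAverage (fun z => z / (z + t * w) * g z) 0 1 = g (-(t * w)) := by
    simpa using hg.circleAverage_smul_div (w := -(t * w)) (by simpa using hw)
  have hcirc : CircleIntegrable (fun z => z / (z + t * w) * g z) 0 1 :=
    ContinuousOn.circleIntegrable' ((by fun_prop (disch := exact hne) :
      ContinuousOn (fun z => z / (z + t * w)) (sphere 0 |1|)).mul hcont)
  calc circleAverage (fun z => g z * (w / (z + t * w))) 0 1
      = circleAverage (fun z => (t : ℂ)⁻¹ • (g z - z / (z + t * w) * g z)) 0 1 :=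
        circleAverage_congr_sphere fun z hz => by
          have ht' : (t : ℂ) ≠ 0 := Complex.ofReal_ne_zero.2 ht
          have hsplit : z / (z + t * w) = 1 - t * w / (z + t * w) := by
            rw [eq_sub_iff_add_eq, ← add_div, div_self (hne z hz)]
          simp only [hsplit, smul_eq_mul]
          field_simp
          ring
    _ = (g 0 - g (-(t * w))) / t := by
        rw [circleAverage_fun_smul, circleAverage_fun_sub hcont.circleIntegrable' hcirc, hmean,
          hcauchy, smul_eq_mul, inv_mul_eq_div]

theorem norm_mul_lt_one_of_norm_le_one {R : Type*} [SeminormedRing R] {x y : R} (hx : ‖x‖ < 1)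
    (hy : ‖y‖ ≤ 1) : ‖x * y‖ < 1 :=
  ((norm_mul_le x y).trans (mul_le_of_le_one_right (norm_nonneg x) hy)).trans_lt hx

theorem one_add_mul_mem_slitPlane (hb : ‖b‖ < 1) {z : ℂ} (hz : ‖z‖ ≤ 1) :
    1 + b * z ∈ Complex.slitPlane :=
  Complex.mem_slitPlane_of_norm_lt_one (norm_mul_lt_one_of_norm_le_one hb hz)

theorem diffContOnCl_log_one_add_mul_pow (hb : ‖b‖ < 1) (k : ℕ) :
    DiffContOnCl ℂ (fun z => Complex.log (1 + b * z) ^ k) (ball 0 1) := by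
  refine DifferentiableOn.diffContOnCl_ball (U := closedBall 0 1) (fun z hz => ?_) subset_rfl
  have hmem := one_add_mul_mem_slitPlane hb (mem_closedBall_zero_iff.1 hz)
  fun_prop (disch := exact hmem)

theorem conj_log_one_add_mul (hb : ‖b‖ < 1) {z : ℂ} (hz : ‖z‖ = 1) :
    conj (Complex.log (1 + b * z)) = ∫ t in (0 : ℝ)..1, conj b / (z + t * conj b) := by
  have hz0 : z ≠ 0 := norm_ne_zero_iff.1 (by simp [hz])
  have hmem := one_add_mul_mem_slitPlane hb hz.le
  have hmem' : 1 + conj b * z⁻¹ ∈ Complex.slitPlane :=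
    one_add_mul_mem_slitPlane (by simpa using hb) (by simp [hz])
  rw [← Complex.log_conj _ (Complex.slitPlane_arg_ne_pi hmem), map_add, map_one, map_mul,
    ← Complex.inv_eq_conj hz, Complex.log_eq_integral hmem', ← intervalIntegral.integral_const_mul]
  refine intervalIntegral.integral_congr fun t _ => ?_
  simp only [Complex.real_smul]
  rw [← div_eq_mul_inv, ← div_eq_mul_inv, div_div, mul_add, mul_one]
  congr 2
  field_simp

theorem circleAverage_mul_conj_log (hb : ‖b‖ < 1) (hg : DiffContOnCl ℂ g (ball 0 1)) :
    circleAverage (fun z => g z * conj (Complex.log (1 + b * z))) 0 1 =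
      ∫ t in (0 : ℝ)..1, (g 0 - g (-(t * conj b))) / t := by
  have hnorm : ∀ t ∈ Icc (0 : ℝ) 1, ‖t * conj b‖ < 1 := fun t ht => by
    rw [mul_comm]
    exact norm_mul_lt_one_of_norm_le_one (by simpa using hb)
      (by simpa [abs_of_nonneg ht.1] using ht.2)
  have hcont : ContinuousOn (Function.uncurry fun (z : ℂ) (t : ℝ) =>
      g z * (conj b / (z + t * conj b))) (sphere 0 |1| ×ˢ uIcc 0 1) := by
    refine (hg.continuousOn_ball.comp continuousOn_fst fun p hp => ?_).mul
      (ContinuousOn.div (by fun_prop) (by fun_prop) fun p hp => add_ne_zero_of_norm_lt ?_)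
    · simpa using hp.1.le
    · rw [mem_sphere_zero_iff_norm.1 hp.1, abs_one]
      exact hnorm p.2 (by simpa using hp.2)
  calc circleAverage (fun z => g z * conj (Complex.log (1 + b * z))) 0 1
      = circleAverage (fun z => ∫ t in (0 : ℝ)..1, g z * (conj b / (z + t * conj b))) 0 1 :=
        circleAverage_congr_sphere fun z hz => by
          simp only [conj_log_one_add_mul hb (show ‖z‖ = 1 by simpa using hz),
            intervalIntegral.integral_const_mul]
    _ = ∫ t in (0 : ℝ)..1, circleAverage (fun z => g z * (conj b / (z + t * conj b))) 0 1 :=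
        circleAverage_intervalIntegral_swap hcont
    _ = ∫ t in (0 : ℝ)..1, (g 0 - g (-(t * conj b))) / t := by
        simp only [intervalIntegral.integral_of_le zero_le_one]
        exact setIntegral_congr_fun measurableSet_Ioc fun t ht =>
          circleAverage_mul_div_add hg ht.1.ne' (hnorm t ⟨ht.1.le, ht.2⟩)

theorem integral_log_one_sub_mul_pow_div {k : ℕ} (hk : k ≠ 0) (r : ℝ) :
    ∫ t in (0 : ℝ)..1, log (1 - t * r) ^ k / t = ∫ u in (0 : ℝ)..r, log (1 - u) ^ k / u := by
  have hsubst := intervalIntegral.smul_integral_comp_mul_right (a := 0) (b := 1)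
    (fun u => log (1 - u) ^ k / u) r
  rw [zero_mul, one_mul, smul_eq_mul, ← intervalIntegral.integral_const_mul] at hsubst
  rw [← hsubst]
  refine intervalIntegral.integral_congr fun t _ => ?_
  rcases eq_or_ne r 0 with rfl | hr
  · simp [hk]
  · field_simp

theorem circleAverage_log_pow_mul_conj_log (hb : ‖b‖ < 1) {k : ℕ} (hk : k ≠ 0) :
    circleAverage (fun z => Complex.log (1 + b * z) ^ k * conj (Complex.log (1 + b * z))) 0 1 =
      ((-∫ u in (0 : ℝ)..‖b‖ ^ 2, log (1 - u) ^ k / u : ℝ) : ℂ) := by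
  rw [circleAverage_mul_conj_log hb (diffContOnCl_log_one_add_mul_pow hb k),
    ← integral_log_one_sub_mul_pow_div hk, ← intervalIntegral.integral_neg,
    ← intervalIntegral.integral_ofReal]
  refine intervalIntegral.integral_congr fun t ht => ?_
  rw [uIcc_of_le zero_le_one] at ht
  have harg : 1 + b * -(t * conj b) = ((1 - t * ‖b‖ ^ 2 : ℝ) : ℂ) := by
    push_cast
    rw [← Complex.mul_conj']
    ring
  have hnonneg : 0 ≤ 1 - t * ‖b‖ ^ 2 := sub_nonneg.2
    (mul_le_one₀ ht.2 (by positivity) (pow_le_one₀ (norm_nonneg b) hb.le))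
  simp only [harg, ← Complex.ofReal_log hnonneg]
  simp [hk, neg_div]

theorem continuousOn_log_one_add_mul (hb : ‖b‖ < 1) :
    ContinuousOn (fun z => Complex.log (1 + b * z)) (sphere 0 |1|) := by
  have hcont := (diffContOnCl_log_one_add_mul_pow hb 1).continuousOn_ball
  simp only [pow_one] at hcont
  rw [abs_one]
  exact hcont.mono sphere_subset_closedBall

theorem circleAverage_log_pow (hb : ‖b‖ < 1) {k : ℕ} (hk : k ≠ 0) :
    circleAverage (fun z => Complex.log (1 + b * z) ^ k) 0 1 = 0 := by
  have hmean := DiffContOnCl.circleAverage (R := 1)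
    (abs_one (α := ℝ) ▸ diffContOnCl_log_one_add_mul_pow hb k)
  simpa [hk] using hmean

theorem circleAverage_re {f : ℂ → ℂ} {c : ℂ} {R : ℝ} (hf : CircleIntegrable f c R) :
    circleAverage (fun z => (f z).re) c R = (circleAverage f c R).re :=
  Complex.reCLM.circleAverage_comp_comm hf

theorem circleAverage_log_norm_one_add_mul (hb : ‖b‖ < 1) :
    circleAverage (fun z => log ‖1 + b * z‖) 0 1 = 0 := by
  have hmean := circleAverage_log_pow hb one_ne_zero
  simp only [pow_one] at hmean
  simpa [Complex.log_re, hmean] using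
    circleAverage_re (continuousOn_log_one_add_mul hb).circleIntegrable'

theorem circleAverage_re_log_pow_add (hb : ‖b‖ < 1) {k : ℕ} (hk : k ≠ 0) (p q : ℝ) :
    circleAverage (fun z => (p • Complex.log (1 + b * z) ^ (k + 1) +
        q • (Complex.log (1 + b * z) ^ k * conj (Complex.log (1 + b * z)))).re) 0 1 =
      -q * ∫ u in (0 : ℝ)..‖b‖ ^ 2, log (1 - u) ^ k / u := by
  have hcont := continuousOn_log_one_add_mul hb
  have hpow : CircleIntegrable (fun z => p • Complex.log (1 + b * z) ^ (k + 1)) 0 1 :=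
    ((hcont.pow (k + 1)).const_smul p).circleIntegrable'
  have hconj : CircleIntegrable (fun z => q • (Complex.log (1 + b * z) ^ k *
      conj (Complex.log (1 + b * z)))) 0 1 :=
    (((hcont.pow k).mul (Complex.continuous_conj.comp_continuousOn hcont)).const_smul
      q).circleIntegrable'
  rw [circleAverage_re (hpow.fun_add hconj), circleAverage_fun_add hpow hconj,
    circleAverage_fun_smul, circleAverage_fun_smul, circleAverage_log_pow hb k.succ_ne_zero,
    circleAverage_log_pow_mul_conj_log hb hk]
  simp

theorem circleAverage_two_mul_log_norm_one_add_mul_sq (hb : ‖b‖ < 1) :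
    circleAverage (fun z => (2 * log ‖1 + b * z‖) ^ 2) 0 1 =
      -2 * ∫ u in (0 : ℝ)..‖b‖ ^ 2, log (1 - u) / u := by
  have h := circleAverage_re_log_pow_add hb one_ne_zero 2 2
  simp only [pow_one] at h
  rw [← h]
  congr 1 with z
  rw [← Complex.log_re]
  simp only [one_add_one_eq_two, pow_two, Complex.add_re, Complex.smul_re, smul_eq_mul,
    Complex.mul_re, Complex.conj_re, Complex.conj_im]
  ring

theorem circleAverage_two_mul_log_norm_one_add_mul_pow_three (hb : ‖b‖ < 1) :
    circleAverage (fun z => (2 * log ‖1 + b * z‖) ^ 3) 0 1 =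
      -6 * ∫ u in (0 : ℝ)..‖b‖ ^ 2, log (1 - u) ^ 2 / u := by
  rw [← circleAverage_re_log_pow_add hb two_ne_zero 2 6]
  congr 1 with z
  rw [← Complex.log_re]
  simp only [pow_succ, pow_zero, one_mul, Complex.add_re, Complex.smul_re, smul_eq_mul,
    Complex.mul_re, Complex.mul_im, Complex.conj_re, Complex.conj_im]
  ring

theorem circleAverage_const_add_two_mul_log_norm_one_add_mul_pow_three (hb : ‖b‖ < 1) (c : ℝ) :
    circleAverage (fun z => (c + 2 * log ‖1 + b * z‖) ^ 3) 0 1 =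
      c ^ 3 - 6 * c * (∫ u in (0 : ℝ)..‖b‖ ^ 2, log (1 - u) / u) -
        6 * ∫ u in (0 : ℝ)..‖b‖ ^ 2, log (1 - u) ^ 2 / u := by
  have hcont : ContinuousOn (fun z => log ‖1 + b * z‖) (sphere 0 |1|) := by
    simpa [Complex.log_re, Function.comp_def] using
      Complex.continuous_re.comp_continuousOn (continuousOn_log_one_add_mul hb)
  have hone : CircleIntegrable (fun z => (6 * c ^ 2) • log ‖1 + b * z‖) 0 1 :=
    (hcont.const_smul (6 * c ^ 2)).circleIntegrable'
  have hsq : CircleIntegrable (fun z => (3 * c) • (2 * log ‖1 + b * z‖) ^ 2) 0 1 :=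
    (((continuousOn_const.mul hcont).pow 2).const_smul (3 * c)).circleIntegrable'
  have hcube : CircleIntegrable (fun z => (2 * log ‖1 + b * z‖) ^ 3) 0 1 :=
    ((continuousOn_const.mul hcont).pow 3).circleIntegrable'
  have hconst : CircleIntegrable (fun _ => c ^ 3) 0 1 := circleIntegrable_const _ _ _
  have hexpand : ∀ z : ℂ, (c + 2 * log ‖1 + b * z‖) ^ 3 = c ^ 3 + (6 * c ^ 2) • log ‖1 + b * z‖ +
      (3 * c) • (2 * log ‖1 + b * z‖) ^ 2 + (2 * log ‖1 + b * z‖) ^ 3 := fun z => by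
    simp only [smul_eq_mul]
    ring
  simp only [hexpand]
  rw [circleAverage_fun_add ((hconst.fun_add hone).fun_add hsq) hcube,
    circleAverage_fun_add (hconst.fun_add hone) hsq, circleAverage_fun_add hconst hone,
    circleAverage_const, circleAverage_fun_smul, circleAverage_fun_smul,
    circleAverage_log_norm_one_add_mul hb, circleAverage_two_mul_log_norm_one_add_mul_sq hb,
    circleAverage_two_mul_log_norm_one_add_mul_pow_three hb]
  simp only [smul_eq_mul]
  ring

theorem circleAverage_two_mul_log_norm_sqrt_two_add_pow_three :
    circleAverage (fun z : ℂ => (2 * log ‖√2 + z‖) ^ 3) 0 1 =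
      π ^ 2 / 2 * log 2 - 3 / 4 * logMoment 2 := by
  have hnorm : ‖((√2 : ℝ) : ℂ)⁻¹‖ ^ 2 = 1 / 2 := by simp
  have hlt : ‖((√2 : ℝ) : ℂ)⁻¹‖ < 1 := by
    rw [← sq_lt_one_iff₀ (norm_nonneg _), hnorm]
    norm_num
  have hne : ((√2 : ℝ) : ℂ) ≠ 0 := by simp
  have hlog : EqOn (fun z : ℂ => (2 * log ‖√2 + z‖) ^ 3)
      (fun z => (log 2 + 2 * log ‖1 + ((√2 : ℝ) : ℂ)⁻¹ * z‖) ^ 3) (sphere 0 |1|) := fun z hz => by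
    have hfactor : √2 + z = √2 * (1 + ((√2 : ℝ) : ℂ)⁻¹ * z) := by field_simp
    have hmem := one_add_mul_mem_slitPlane hlt (z := z) (by simpa using le_of_eq hz)
    simp only [hfactor, norm_mul]
    rw [log_mul (norm_ne_zero_iff.2 hne) (norm_ne_zero_iff.2 (Complex.slitPlane_ne_zero hmem)),
      Complex.norm_of_nonneg (sqrt_nonneg 2), log_sqrt zero_le_two]
    ring
  rw [circleAverage_congr_sphere hlog,
    circleAverage_const_add_two_mul_log_norm_one_add_mul_pow_three hlt, hnorm,
    integral_log_one_sub_div, integral_log_one_sub_sq_div]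
  ring

end CircleAverage

/-! ### Iterated integrals and reduction to a circle average -/

theorem Omega_append_singleton (fs : List (ℂ → ℂ)) (f : ℂ → ℂ) (z : ℝ) :
    Omega (fs ++ [f]) z = ∫ t in (0 : ℝ)..z, Omega fs t * f t := by
  rw [Omega, List.foldl_append]
  rfl

theorem Omega_replicate {f : ℂ → ℂ} {L : ℝ → ℂ} (hL : ∀ t : ℝ, HasDerivAt L (f t) t)
    (hf : Continuous fun t : ℝ => f t) (hL0 : L 0 = 0) (n : ℕ) (z : ℝ) :
    Omega (List.replicate n f) z = L z ^ n / n.factorial := by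
  induction n generalizing z with
  | zero => simp [Omega]
  | succ n ih =>
    have hderiv : ∀ t : ℝ, HasDerivAt (fun t => L t ^ (n + 1) / (n + 1).factorial)
        (L t ^ n / n.factorial * f t) t := fun t => by
      refine (((hL t).pow (n + 1)).div_const _).congr_deriv ?_
      rw [Nat.factorial_succ]
      push_cast
      field_simp
    have hcont : Continuous L := continuous_iff_continuousAt.2 fun t => (hL t).continuousAt
    rw [List.replicate_succ', Omega_append_singleton]
    simp only [ih]
    rw [intervalIntegral.integral_eq_sub_of_hasDerivAt (fun t _ => hderiv t)
      ((((hcont.pow n).div_const _).mul hf).intervalIntegrable _ _)]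
    simp [hL0]

/-- The real quadratic polynomial `(x - p₁) * (x - p₄)`; its reflection `quad (-x)` is
`(x - p₂) * (x - p₃)`. -/
def quad (x : ℝ) : ℝ := x ^ 2 - √2 * x + 1

theorem quad_pos (x : ℝ) : 0 < quad x := by
  have h : quad x = (x - √2 / 2) ^ 2 + 1 / 2 := by
    rw [quad, sub_sq, div_pow, sq_sqrt zero_le_two]
    ring
  rw [h]
  positivity

theorem hasDerivAt_quad (x : ℝ) : HasDerivAt quad (2 * x - √2) x := by
  refine (((hasDerivAt_pow 2 x).sub ((hasDerivAt_id x).const_mul √2)).add_const 1).congr_deriv ?_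
  simp

theorem continuous_quad : Continuous quad :=
  continuous_iff_continuousAt.2 fun x => (hasDerivAt_quad x).continuousAt

theorem continuous_sqrt_two_div_quad : Continuous fun x => √2 / quad x :=
  continuous_const.div continuous_quad fun x => (quad_pos x).ne'

theorem p₁_eq : p₁ = √2 / 2 * (1 + Complex.I) := by
  rw [p₁, mul_comm, Complex.exp_mul_I, ← Complex.ofReal_ofNat, ← Complex.ofReal_div,
    ← Complex.ofReal_cos, ← Complex.ofReal_sin, cos_pi_div_four, sin_pi_div_four]
  push_cast
  ring

theorem p₄_eq : p₄ = √2 / 2 * (1 - Complex.I) := by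
  rw [p₄, p₂, neg_neg, mul_comm, ← neg_mul, Complex.exp_mul_I, Complex.cos_neg, Complex.sin_neg,
    ← Complex.ofReal_ofNat, ← Complex.ofReal_div,
    ← Complex.ofReal_cos, ← Complex.ofReal_sin, cos_pi_div_four, sin_pi_div_four]
  push_cast
  ring

theorem ofReal_sqrt_two_sq : ((√2 : ℝ) : ℂ) ^ 2 = 2 := by
  exact_mod_cast sq_sqrt zero_le_two

theorem sub_p₁_mul_sub_p₄ (x : ℝ) : ((x : ℂ) - p₁) * (x - p₄) = quad x := by
  rw [p₁_eq, p₄_eq, quad]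
  push_cast
  linear_combination (1 - Complex.I ^ 2) / 4 * ofReal_sqrt_two_sq - Complex.I_sq / 2

theorem sub_p₁_ne_zero (x : ℝ) : (x : ℂ) - p₁ ≠ 0 :=
  left_ne_zero_of_mul <| (sub_p₁_mul_sub_p₄ x).trans_ne (Complex.ofReal_ne_zero.2 (quad_pos x).ne')

theorem sub_p₄_ne_zero (x : ℝ) : (x : ℂ) - p₄ ≠ 0 :=
  right_ne_zero_of_mul <| (sub_p₁_mul_sub_p₄ x).trans_ne (Complex.ofReal_ne_zero.2 (quad_pos x).ne')

theorem one_div_sub_p₁_add_one_div_sub_p₄ (x : ℝ) :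
    1 / ((x : ℂ) - p₁) + 1 / (x - p₄) = ((2 * x - √2) / quad x : ℝ) := by
  rw [div_add_div _ _ (sub_p₁_ne_zero x) (sub_p₄_ne_zero x), sub_p₁_mul_sub_p₄, p₁_eq, p₄_eq]
  push_cast
  ring

theorem one_div_sub_p₁_sub_one_div_sub_p₄ (x : ℝ) :
    1 / ((x : ℂ) - p₁) - 1 / (x - p₄) = Complex.I * (√2 / quad x : ℝ) := by
  rw [div_sub_div _ _ (sub_p₁_ne_zero x) (sub_p₄_ne_zero x), sub_p₁_mul_sub_p₄, p₁_eq, p₄_eq]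
  push_cast
  ring

theorem one_div_sub_neg (x : ℝ) (p : ℂ) : 1 / ((x : ℂ) - -p) = -(1 / (((-x : ℝ) : ℂ) - p)) := by
  rw [← one_div_neg_eq_neg_one_div]
  push_cast
  ring_nf

theorem F₁_ofReal (x : ℝ) :
    F₁ x = Complex.I * ((√2 / quad x - √2 / quad (-x) : ℝ) : ℂ) := by
  have h₂ : p₂ = -p₄ := (neg_neg p₂).symm
  rw [F₁, p₃, h₂, one_div_sub_neg, one_div_sub_neg, Complex.ofReal_sub, mul_sub,
    ← one_div_sub_p₁_sub_one_div_sub_p₄, ← one_div_sub_p₁_sub_one_div_sub_p₄]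
  ring

theorem F₂_ofReal (x : ℝ) :
    F₂ x = (((2 * x - √2) / quad x + (2 * -x - √2) / quad (-x) : ℝ) : ℂ) := by
  have h₂ : p₂ = -p₄ := (neg_neg p₂).symm
  rw [F₂, p₃, h₂, one_div_sub_neg, one_div_sub_neg, Complex.ofReal_add,
    ← one_div_sub_p₁_add_one_div_sub_p₄, ← one_div_sub_p₁_add_one_div_sub_p₄]
  ring

/-- The primitive `Ω₂` of `F₂` along the real line. -/
def logRatio (x : ℝ) : ℝ := log (quad x) - log (quad (-x))

theorem logRatio_neg (x : ℝ) : logRatio (-x) = -logRatio x := by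
  simp [logRatio]

theorem hasDerivAt_logRatio (x : ℝ) :
    HasDerivAt logRatio ((2 * x - √2) / quad x + (2 * -x - √2) / quad (-x)) x := by
  have hneg := ((hasDerivAt_quad (-x)).comp x (hasDerivAt_neg x)).log (quad_pos (-x)).ne'
  refine (((hasDerivAt_quad x).log (quad_pos x).ne').sub hneg).congr_deriv ?_
  simp only [Function.comp_apply]
  ring

theorem continuous_logRatio : Continuous logRatio :=
  continuous_iff_continuousAt.2 fun x => (hasDerivAt_logRatio x).continuousAt

theorem Omega_replicate_F₂ (n : ℕ) (z : ℝ) :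
    Omega (List.replicate n F₂) z = (logRatio z : ℂ) ^ n / n.factorial := by
  refine Omega_replicate (L := fun x => logRatio x) (fun t => ?_) ?_ ?_ n z
  · rw [F₂_ofReal]
    exact (hasDerivAt_logRatio t).ofReal_comp
  · have hquad := continuous_quad
    have hne : ∀ x, quad x ≠ 0 := fun x => (quad_pos x).ne'
    simp only [F₂_ofReal]
    fun_prop (disch := simp [hne])
  · simp [logRatio]

theorem integral_add_comp_neg {E : Type*} [NormedAddCommGroup E] [NormedSpace ℝ E] {f : ℝ → E}
    {a : ℝ} (hf : IntervalIntegrable f volume (-a) 0) (hf' : IntervalIntegrable f volume 0 a) :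
    ∫ x in (0 : ℝ)..a, (f x + f (-x)) = ∫ x in -a..a, f x := by
  have hneg : IntervalIntegrable (fun x => f (-x)) volume 0 a := by
    simpa using hf.symm.comp_sub_left 0
  rw [intervalIntegral.integral_add hf' hneg, intervalIntegral.integral_comp_neg, neg_zero,
    add_comm, intervalIntegral.integral_add_adjacent_intervals hf hf']

theorem Omega_eq_integral_logRatio_pow_three :
    Omega [F₂, F₂, F₂, F₁] 1 =
      Complex.I / 6 * ((∫ x in (-1 : ℝ)..1, logRatio x ^ 3 * (√2 / quad x) : ℝ) : ℂ) := by
  have hcont : Continuous fun x => logRatio x ^ 3 * (√2 / quad x) := by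
    have hlog := continuous_logRatio
    have hquad := continuous_sqrt_two_div_quad
    fun_prop
  have happ := Omega_append_singleton (List.replicate 3 F₂) F₁ 1
  rw [← integral_add_comp_neg (hcont.intervalIntegrable _ _) (hcont.intervalIntegrable _ _),
    ← intervalIntegral.integral_ofReal, ← intervalIntegral.integral_const_mul]
  refine happ.trans (intervalIntegral.integral_congr fun x _ => ?_)
  simp only [Omega_replicate_F₂, F₁_ofReal, logRatio_neg]
  have hfact : Nat.factorial 3 = 6 := rfl
  rw [hfact]
  push_cast
  ring

/-- The angle `θ` with `‖√2 + e^{iθ}‖² = quad (-x) / quad x` which substitutes the lower half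
`-π ≤ θ ≤ 0` of the unit circle for `-1 ≤ x ≤ 1`. -/
def circleAngle (x : ℝ) : ℝ := 2 * arctan (√2 * x - 1) - π / 4

theorem one_add_sqrt_two_mul_sub_one_sq (x : ℝ) : 1 + (√2 * x - 1) ^ 2 = 2 * quad x := by
  rw [quad, sub_sq, mul_pow, sq_sqrt zero_le_two]
  ring

theorem hasDerivAt_circleAngle (x : ℝ) : HasDerivAt circleAngle (√2 / quad x) x := by
  have hlin : HasDerivAt (fun x => √2 * x - 1) √2 x := by
    simpa using ((hasDerivAt_id x).const_mul √2).sub_const 1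
  refine ((hlin.arctan.const_mul 2).sub_const (π / 4)).congr_deriv ?_
  rw [one_add_sqrt_two_mul_sub_one_sq]
  have := (quad_pos x).ne'
  field_simp

theorem circleAngle_one : circleAngle 1 = 0 := by
  have hsq : √2 ^ 2 = 2 := sq_sqrt zero_le_two
  have hlt : 1 < √2 := one_lt_sqrt_two
  have hlt' : √2 < 2 := by nlinarith
  have htan : 2 * (√2 * 1 - 1) / (1 - (√2 * 1 - 1) ^ 2) = 1 := by
    rw [div_eq_one_iff_eq (by nlinarith)]
    linear_combination hsq
  rw [circleAngle, two_mul_arctan (by linarith) (by linarith), htan, arctan_one, sub_self]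

theorem circleAngle_neg_one : circleAngle (-1) = -π := by
  have hsq : √2 ^ 2 = 2 := sq_sqrt zero_le_two
  have hpos : 0 < √2 := by positivity
  have htan : 2 * (√2 * -1 - 1) / (1 - (√2 * -1 - 1) ^ 2) = 1 := by
    rw [div_eq_one_iff_eq (by nlinarith)]
    linear_combination hsq
  rw [circleAngle, two_mul_arctan_sub_pi (by linarith), htan, arctan_one]
  ring

theorem sq_norm_sqrt_two_add_circleMap (θ : ℝ) :
    ‖√2 + circleMap 0 1 θ‖ ^ 2 = 3 + 2 * √2 * cos θ := by
  have hsq : √2 ^ 2 = 2 := sq_sqrt zero_le_two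
  rw [Complex.sq_norm, Complex.normSq_apply, circleMap_zero, Complex.ofReal_one, one_mul]
  simp only [Complex.add_re, Complex.add_im, Complex.ofReal_re, Complex.ofReal_im,
    Complex.exp_ofReal_mul_I_re, Complex.exp_ofReal_mul_I_im]
  linear_combination hsq + cos_sq_add_sin_sq θ

theorem sq_norm_sqrt_two_add_circleMap_circleAngle (x : ℝ) :
    ‖√2 + circleMap 0 1 (circleAngle x)‖ ^ 2 = quad (-x) / quad x := by
  set α := arctan (√2 * x - 1) with hα
  have hsq : √2 ^ 2 = 2 := sq_sqrt zero_le_two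
  have hcos_sq : cos α ^ 2 = 1 / (2 * quad x) := by
    rw [cos_sq_arctan, one_add_sqrt_two_mul_sub_one_sq]
  have hsin : sin α = (√2 * x - 1) * cos α := by
    rw [← tan_arctan (√2 * x - 1), tan_mul_cos (cos_arctan_pos _).ne']
  have hquad := (quad_pos x).ne'
  rw [sq_norm_sqrt_two_add_circleMap, circleAngle, ← hα, cos_sub, cos_pi_div_four,
    sin_pi_div_four, cos_two_mul, sin_two_mul, hsin]
  have hexpand : 3 + 2 * √2 * ((2 * cos α ^ 2 - 1) * (√2 / 2) +
      2 * ((√2 * x - 1) * cos α) * cos α * (√2 / 2)) = 1 + 4 * √2 * x * cos α ^ 2 := by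
    linear_combination (2 * cos α ^ 2 - 1 + 2 * (√2 * x - 1) * cos α ^ 2) * hsq
  have hreflect : quad (-x) = quad x + 2 * √2 * x := by
    simp only [quad]
    ring
  rw [hexpand, hcos_sq, hreflect]
  field_simp
  ring

theorem two_mul_log_norm_circleMap_circleAngle (x : ℝ) :
    2 * log ‖√2 + circleMap 0 1 (circleAngle x)‖ = -logRatio x := by
  rw [logRatio, neg_sub, ← log_div (quad_pos _).ne' (quad_pos x).ne',
    ← sq_norm_sqrt_two_add_circleMap_circleAngle, log_pow, Nat.cast_ofNat]

theorem circleAverage_eq_integral_neg_pi_zero {E : Type*} [NormedAddCommGroup E] [NormedSpace ℝ E]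
    {f : ℂ → E} {R : ℝ} (hf : CircleIntegrable f 0 R) (hconj : ∀ z, f (conj z) = f z) :
    circleAverage f 0 R = π⁻¹ • ∫ θ in -π..0, f (circleMap 0 R θ) := by
  have hint : ∀ a b, IntervalIntegrable (fun θ => f (circleMap 0 R θ)) volume a b := fun a b =>
    ((periodic_circleMap 0 R).comp f).intervalIntegrable₀ two_pi_pos.ne' hf a b
  have hshift : circleAverage f 0 R = (2 * π)⁻¹ • ∫ θ in -π..π, f (circleMap 0 R θ) := by
    rw [circleAverage_eq_integral_add (-π),
      intervalIntegral.integral_comp_add_right fun θ => f (circleMap 0 R θ)]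
    ring_nf
  have heven : ∀ θ, f (circleMap 0 R θ) + f (circleMap 0 R (-θ)) =
      (2 : ℝ) • f (circleMap 0 R (-θ)) := fun θ => by
    rw [two_smul, ← conj_circleMap_zero, hconj]
  rw [hshift, ← integral_add_comp_neg (hint _ _) (hint _ _)]
  simp only [heven]
  rw [intervalIntegral.integral_smul, smul_smul, mul_inv_rev,
    inv_mul_cancel_right₀ two_ne_zero,
    intervalIntegral.integral_comp_neg fun θ => f (circleMap 0 R θ), neg_zero]

theorem continuous_log_norm_sqrt_two_add_circleMap :
    Continuous fun θ => log ‖√2 + circleMap 0 1 θ‖ := by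
  have hne : ∀ θ, ‖√2 + circleMap 0 1 θ‖ ≠ 0 := fun θ =>
    norm_ne_zero_iff.2 (add_ne_zero_of_norm_lt (by simp [abs_of_nonneg, one_lt_sqrt_two]))
  exact (by fun_prop : Continuous fun θ => ‖√2 + circleMap 0 1 θ‖).log hne

theorem integral_logRatio_pow_three_mul :
    ∫ x in (-1 : ℝ)..1, logRatio x ^ 3 * (√2 / quad x) =
      -π * circleAverage (fun z => (2 * log ‖√2 + z‖) ^ 3) 0 1 := by
  set f : ℂ → ℝ := fun z => (2 * log ‖√2 + z‖) ^ 3 with hf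
  have hcont : Continuous fun θ => f (circleMap 0 1 θ) :=
    (continuous_const.mul continuous_log_norm_sqrt_two_add_circleMap).pow 3
  have hconj : ∀ z, f (conj z) = f z := fun z => by
    simp only [hf]
    rw [← Complex.norm_conj (√2 + z), map_add, Complex.conj_ofReal]
  have hangle : ∀ x, logRatio x ^ 3 * (√2 / quad x) =
      -(f (circleMap 0 1 (circleAngle x)) * (√2 / quad x)) := fun x => by
    simp only [hf, two_mul_log_norm_circleMap_circleAngle]
    ring
  have hsubst : ∫ x in (-1 : ℝ)..1, f (circleMap 0 1 (circleAngle x)) * (√2 / quad x) =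
      ∫ θ in -π..0, f (circleMap 0 1 θ) := by
    rw [← circleAngle_one, ← circleAngle_neg_one]
    exact intervalIntegral.integral_comp_mul_deriv (fun x _ => hasDerivAt_circleAngle x)
      continuous_sqrt_two_div_quad.continuousOn hcont
  simp only [hangle, intervalIntegral.integral_neg]
  rw [hsubst, circleAverage_eq_integral_neg_pi_zero (hcont.intervalIntegrable _ _) hconj,
    smul_eq_mul, neg_mul, mul_inv_cancel_left₀ pi_ne_zero]

/- STATEMENT 15: `Ω_{2,2,2,1} = -(iπ³/12) log 2 + (iπ/4) ζ(3)`. -/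
theorem stmt_15 :
    Omega [F₂, F₂, F₂, F₁] 1 =
      -(Complex.I * (Real.pi : ℂ) ^ 3 / 12) * ((Real.log 2 : ℝ) : ℂ) +
        Complex.I * (Real.pi : ℂ) / 4 * riemannZeta 3 := by
  rw [Omega_eq_integral_logRatio_pow_three, integral_logRatio_pow_three_mul,
    circleAverage_two_mul_log_norm_sqrt_two_add_pow_three]
  push_cast
  rw [ofReal_logMoment_two]
  ring
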